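/- arXiv:2401.12891 — 3 statements merged into one kernel-verified Lean document; each statement's English description precedes it below -/
import Mathlib

section
/- Let q be a prime and let r be an integer coprime to q. Then ∑*_{χ mod q} G(χ)²·conj(χ)(r) = φ(q)·S(1, r; q) − 1, where the sum is over all primitive Dirichlet characters χ modulo q. -/
open Finset

/-- `e_q(x) = exp(2πi x / q)`. -/
noncomputable def expq (q : ℕ) (x : ℤ) : ℂ :=
  Complex.exp (2 * Real.pi * Complex.I * x / q)

/-- The Kloosterman sum `S(a, b; q) = ∑_{x ∈ (ℤ/qℤ)ˣ} e_q(a x + b x⁻¹)`. -/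
noncomputable def kloos (a b : ℤ) (q : ℕ) [NeZero q] : ℂ :=
  ∑ x : (ZMod q)ˣ,
    expq q (a * ((x : ZMod q).val : ℤ) + b * ((((x⁻¹ : (ZMod q)ˣ) : ZMod q)).val : ℤ))

/-- The Gauss sum `G(χ) = ∑_{a mod q} χ(a) e_q(a)`. -/
noncomputable def gaussS {q : ℕ} [NeZero q] (χ : DirichletCharacter ℂ q) : ℂ :=
  ∑ a : ZMod q, χ a * expq q (a.val : ℤ)

lemma expq_eq (q : ℕ) [NeZero q] (x : ℤ) : expq q x = ZMod.stdAddChar (x : ZMod q) := by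
  rw [ZMod.stdAddChar_coe, expq]

lemma isPrimitive_iff_ne_one (q : ℕ) [NeZero q] (hq : q.Prime) (χ : DirichletCharacter ℂ q) :
    χ.IsPrimitive ↔ χ ≠ 1 := by
  rw [DirichletCharacter.isPrimitive_def, Ne,
    DirichletCharacter.eq_one_iff_conductor_eq_one]
  constructor
  · intro h h1
    exact hq.one_lt.ne (h1.symm.trans h)
  · intro h
    exact ((Nat.dvd_prime hq).1 χ.conductor_dvd_level).resolve_left h

lemma gaussS_eq (q : ℕ) [NeZero q] (χ : DirichletCharacter ℂ q) :
    gaussS χ = ∑ a : ZMod q, χ a * ZMod.stdAddChar a := by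
  simp [gaussS, expq_eq]

lemma gaussS_one (q : ℕ) [NeZero q] (hq : q.Prime) :
    gaussS (1 : DirichletCharacter ℂ q) = -1 := by
  have := Fact.mk hq
  rw [gaussS_eq]
  have h : (ZMod.stdAddChar : AddChar (ZMod q) ℂ) ≠ 1 := by
    intro h
    have h2 := @ZMod.injective_stdAddChar q _ 0 1 (by rw [h]; simp)
    exact zero_ne_one h2
  exact gaussSum_one_left h

lemma kloos_eq (q : ℕ) [NeZero q] (r : ℤ) :
    kloos 1 r q = ∑ x : (ZMod q)ˣ, ZMod.stdAddChar ((x : ZMod q)) *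
      ZMod.stdAddChar ((r : ZMod q) * ((x⁻¹ : (ZMod q)ˣ) : ZMod q)) := by
  rw [kloos]
  refine Finset.sum_congr rfl fun x _ => ?_
  rw [expq_eq, ← AddChar.map_add_eq_mul]
  congr 1
  push_cast
  simp

lemma full_sum (q : ℕ) [NeZero q] (hq : q.Prime) (r : ℤ) (hr : IsUnit ((r : ZMod q))) :
    ∑ χ : DirichletCharacter ℂ q, gaussS χ ^ 2 * (starRingEnd ℂ) (χ (r : ZMod q))
      = (q.totient : ℂ) * kloos 1 r q := by
  have := Fact.mk hq
  have h1 : ∀ χ : DirichletCharacter ℂ q, gaussS χ ^ 2 * (starRingEnd ℂ) (χ (r : ZMod q))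
      = ∑ a : ZMod q, ∑ b : ZMod q, (χ (r : ZMod q)⁻¹ * χ (a * b)) *
        (ZMod.stdAddChar a * ZMod.stdAddChar b) := by
    intro χ
    have : (starRingEnd ℂ) (χ (r : ZMod q)) = χ (r : ZMod q)⁻¹ := by
      rw [← MulChar.inv_apply']
      exact MulChar.star_apply' χ _
    rw [this, gaussS_eq, sq, Finset.sum_mul_sum, Finset.sum_mul]
    refine Finset.sum_congr rfl fun a _ => ?_
    rw [Finset.sum_mul]
    refine Finset.sum_congr rfl fun b _ => ?_
    rw [map_mul]; ring
  simp_rw [h1]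
  rw [Finset.sum_comm]
  rw [kloos_eq, Finset.mul_sum]
  symm
  refine Finset.sum_of_injOn (fun x : (ZMod q)ˣ => (x : ZMod q))
    (fun x _ y _ h => Units.ext h) (by simp) ?_ ?_
  · intro a _ ha
    have ha0 : a = 0 := by
      by_contra h
      exact ha ⟨Units.mk0 a h, by simp, rfl⟩
    subst ha0
    simp [MulChar.map_zero]
  · intro x _
    rw [Finset.sum_comm]
    simp_rw [← Finset.sum_mul, DirichletCharacter.sum_char_inv_mul_char_eq ℂ hr]
    rw [Finset.sum_eq_single ((r : ZMod q) * ((x⁻¹ : (ZMod q)ˣ) : ZMod q))]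
    · rw [if_pos]
      rw [mul_left_comm, Units.mul_inv, mul_one]
    · intro b _ hb
      rw [if_neg, zero_mul]
      intro h
      apply hb
      rw [h, mul_comm, Units.inv_mul_cancel_left]
    · intro h
      exact absurd (Finset.mem_univ _) h

/-- For a prime `q` and `r` coprime to `q`, one has
`∑*_{χ mod q} G(χ)² · conj(χ)(r) = φ(q) · S(1, r; q) − 1`, the sum being over
primitive Dirichlet characters modulo `q`. -/
theorem sum_primitive_char_gauss_sq_mul_conj (q : ℕ) [NeZero q] (hq : q.Prime)
    (r : ℤ) (hr : IsUnit ((r : ZMod q))) :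
    ∑ᶠ (χ : DirichletCharacter ℂ q) (_ : χ.IsPrimitive),
        gaussS χ ^ 2 * (starRingEnd ℂ) (χ (r : ZMod q))
      = (q.totient : ℂ) * kloos 1 r q - 1 := by
  classical
  rw [← full_sum q hq r hr, finsum_eq_sum_of_fintype,
    ← Finset.add_sum_erase _ _ (Finset.mem_univ (1 : DirichletCharacter ℂ q)),
    ← Finset.add_sum_erase _ (fun χ : DirichletCharacter ℂ q =>
      gaussS χ ^ 2 * (starRingEnd ℂ) (χ (r : ZMod q))) (Finset.mem_univ 1)]
  have e1 : (∑ᶠ (_ : (1 : DirichletCharacter ℂ q).IsPrimitive),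
      gaussS (1 : DirichletCharacter ℂ q) ^ 2 *
        (starRingEnd ℂ) ((1 : DirichletCharacter ℂ q) (r : ZMod q))) = 0 := by
    have : ¬ (1 : DirichletCharacter ℂ q).IsPrimitive := by
      rw [isPrimitive_iff_ne_one q hq]; simp
    simp [this]
  rw [e1, gaussS_one q hq, MulChar.one_apply hr]
  have e2 : ∀ χ ∈ Finset.univ.erase (1 : DirichletCharacter ℂ q),
      (∑ᶠ (_ : χ.IsPrimitive), gaussS χ ^ 2 * (starRingEnd ℂ) (χ (r : ZMod q)))
        = gaussS χ ^ 2 * (starRingEnd ℂ) (χ (r : ZMod q)) := by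
    intro χ hχ
    have := (isPrimitive_iff_ne_one q hq χ).2 (Finset.ne_of_mem_erase hχ)
    simp [this]
  rw [Finset.sum_congr rfl e2]
  simp
end

section
/- Let r and s be coprime positive integers, let s̄ be an integer inverse of s modulo r and r̄ an integer inverse of r modulo s. Let f : ℤ → ℂ be periodic of period r, let g : ℤ → ℂ be periodic of period s, and let n be an integer. Then ∑_{α = 0}^{rs−1} f(α)·g(α)·e_{rs}(αn) = (∑_{β = 0}^{r−1} f(β)·e_r(β n s̄)) · (∑_{γ = 0}^{s−1} g(γ)·e_s(γ n r̄)). -/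
open Finset

lemma expq_congr (q : ℕ) (hq : 0 < q) (x y : ℤ) (h : (q : ℤ) ∣ x - y) :
    expq q x = expq q y := by
  obtain ⟨k, hk⟩ := h
  have hx : x = y + q * k := by linarith
  have hq' : (q : ℂ) ≠ 0 := by exact_mod_cast hq.ne'
  unfold expq
  rw [Complex.exp_eq_exp_iff_exists_int]
  refine ⟨k, ?_⟩
  rw [hx]
  push_cast
  field_simp

lemma expq_mul_expq (r s : ℕ) (hr : 0 < r) (hs : 0 < s) (x y : ℤ) :
    expq r x * expq s y = expq (r * s) (s * x + r * y) := by
  have hr' : (r : ℂ) ≠ 0 := by exact_mod_cast hr.ne'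
  have hs' : (s : ℂ) ≠ 0 := by exact_mod_cast hs.ne'
  unfold expq
  rw [← Complex.exp_add]
  congr 1
  push_cast
  field_simp

lemma periodic_mod (q : ℕ) (f : ℤ → ℂ) (hf : Function.Periodic f (q : ℤ)) (a : ℕ) :
    f ((a % q : ℕ) : ℤ) = f a := by
  have h : (a : ℤ) = ((a % q : ℕ) : ℤ) + ((a / q : ℕ) : ℤ) * (q : ℤ) := by
    have := Nat.mod_add_div a q
    rw [mul_comm] at this
    exact_mod_cast this.symm
  have h2 := (hf.int_mul ((a / q : ℕ) : ℤ)) ((a % q : ℕ) : ℤ)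
  rw [h]
  exact h2.symm

/-- For coprime positive integers `r`, `s`, with `s̄` an inverse of `s` mod `r` and
`r̄` an inverse of `r` mod `s`, and `f`, `g : ℤ → ℂ` periodic of periods `r`, `s`
respectively, for any integer `n`:
`∑_{α=0}^{rs−1} f(α) g(α) e_{rs}(αn)
  = (∑_{β=0}^{r−1} f(β) e_r(β n s̄)) · (∑_{γ=0}^{s−1} g(γ) e_s(γ n r̄))`. -/
theorem sum_mul_split (r s : ℕ) (hr : 0 < r) (hs : 0 < s) (hrs : Nat.Coprime r s)
    (sbar rbar : ℤ) (hsbar : (r : ℤ) ∣ (s * sbar - 1)) (hrbar : (s : ℤ) ∣ (r * rbar - 1))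
    (f g : ℤ → ℂ) (hf : Function.Periodic f (r : ℤ)) (hg : Function.Periodic g (s : ℤ))
    (n : ℤ) :
    ∑ α ∈ Finset.range (r * s), f (α : ℤ) * g (α : ℤ) * expq (r * s) ((α : ℤ) * n)
      = (∑ β ∈ Finset.range r, f (β : ℤ) * expq r ((β : ℤ) * n * sbar)) *
        (∑ γ ∈ Finset.range s, g (γ : ℤ) * expq s ((γ : ℤ) * n * rbar)) := by
  rw [Finset.sum_mul_sum, ← Finset.sum_product']
  refine Finset.sum_bij' (fun a _ => (a % r, a % s))
    (fun p _ => (Nat.chineseRemainder hrs p.1 p.2 : ℕ)) ?_ ?_ ?_ ?_ ?_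
  · intro a _
    simp [Nat.mod_lt _ hr, Nat.mod_lt _ hs]
  · intro p _
    exact Finset.mem_range.2 (Nat.chineseRemainder_lt_mul hrs p.1 p.2 hr.ne' hs.ne')
  · intro a ha
    have h := Nat.chineseRemainder_modEq_unique hrs (a := a % r) (b := a % s) (z := a)
      (Nat.mod_modEq a r).symm (Nat.mod_modEq a s).symm
    exact (h.symm.eq_of_lt_of_lt
      (Nat.chineseRemainder_lt_mul hrs _ _ hr.ne' hs.ne') (Finset.mem_range.1 ha))
  · rintro ⟨b, c⟩ hp
    simp only [Finset.mem_product, Finset.mem_range] at hp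
    have h := (Nat.chineseRemainder hrs b c).2
    ext
    · exact Eq.trans h.1 (Nat.mod_eq_of_lt hp.1)
    · exact Eq.trans h.2 (Nat.mod_eq_of_lt hp.2)
  · intro a _
    have hcop : IsCoprime (r : ℤ) (s : ℤ) := Nat.isCoprime_iff_coprime.2 hrs
    have hd : ((r * s : ℕ) : ℤ) ∣ 1 - s * sbar - r * rbar := by
      push_cast
      refine hcop.mul_dvd ?_ ?_
      · obtain ⟨k, hk⟩ := hsbar
        exact ⟨-k - rbar, by linear_combination -hk⟩
      · obtain ⟨k, hk⟩ := hrbar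
        exact ⟨-k - sbar, by linear_combination -hk⟩
    have key : ∀ (q : ℕ) (t : ℤ), 0 < q →
        expq q (((a % q : ℕ) : ℤ) * n * t) = expq q ((a : ℤ) * n * t) := by
      intro q t hq
      apply expq_congr q hq
      have h : (a : ℤ) = ((a % q : ℕ) : ℤ) + (q : ℤ) * ((a / q : ℕ) : ℤ) := by
        exact_mod_cast (Nat.mod_add_div a q).symm
      exact ⟨-(((a / q : ℕ) : ℤ) * n * t), by linear_combination (-n * t) * h⟩
    have e : expq (r * s) ((a : ℤ) * n)
        = expq r ((a : ℤ) * n * sbar) * expq s ((a : ℤ) * n * rbar) := by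
      rw [expq_mul_expq r s hr hs]
      apply expq_congr _ (Nat.mul_pos hr hs)
      obtain ⟨k, hk⟩ := hd
      exact ⟨a * n * k, by linear_combination ((a : ℤ) * n) * hk⟩
    dsimp only
    rw [periodic_mod r f hf, periodic_mod s g hg, key r sbar hr, key s rbar hs, e]
    ring
end

section
/- Let W : ℝ → ℂ be a Schwartz function, let Q be a positive integer, let N > 0 be a real number, and let c : ℤ → ℂ be periodic of period Q. Then ∑_{n ∈ ℤ} c(n)·W(n/N) = (N/Q)·∑_{h ∈ ℤ} ĉ(h)·Ŵ(hN/Q), where ĉ(h) = ∑_{α = 0}^{Q−1} c(α)·e_Q(αh) and Ŵ(ξ) = ∫_ℝ W(y)·exp(−2πi ξ y) dy, and both series converge absolutely. -/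
open Finset MeasureTheory

open scoped FourierTransform SchwartzMap in
/-- Dilating a Schwartz function. -/
lemma exists_dilate (W : SchwartzMap ℝ ℂ) (a : ℝ) (ha : a ≠ 0) :
    ∃ f : SchwartzMap ℝ ℂ, ∀ x, f x = W (a * x) := by
  refine ⟨SchwartzMap.compCLMOfContinuousLinearEquiv ℝ
    (ContinuousLinearEquiv.smulLeft (Units.mk0 a ha)) W, fun x => ?_⟩
  rw [SchwartzMap.compCLMOfContinuousLinearEquiv_apply]
  rfl

lemma schwartz_summable_int (f : SchwartzMap ℝ ℂ) : Summable (fun n : ℤ => f (n : ℝ)) :=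
  summable_of_isBigO (Real.summable_abs_int_rpow one_lt_two)
    ((f.isBigO_cocompact_rpow (-2)).comp_tendsto Int.tendsto_coe_cofinite)

lemma norm_expq (q : ℕ) (x : ℤ) : ‖expq q x‖ = 1 := by
  have : expq q x = Complex.exp (((2 * Real.pi * x / q : ℝ) : ℂ) * Complex.I) := by
    unfold expq; congr 1; push_cast; ring
  rw [this, Complex.norm_exp_ofReal_mul_I]

open scoped FourierTransform SchwartzMap in
lemma fourier_dilate (W f : SchwartzMap ℝ ℂ) (a : ℝ) (ha : 0 < a) (hf : ∀ x, f x = W (a * x))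
    (h : ℝ) : 𝓕 f h = ((a⁻¹ : ℝ) : ℂ) *
      ∫ y : ℝ, W y * Complex.exp (-(2 * Real.pi * Complex.I * ((h / a : ℝ)) * y)) := by
  have h2 := Measure.integral_comp_mul_left
    (fun y : ℝ => W y * Complex.exp (-(2 * Real.pi * Complex.I * ((h / a : ℝ)) * y))) a
  rw [abs_of_pos (inv_pos.mpr ha), Complex.real_smul] at h2
  rw [← h2, SchwartzMap.fourier_coe, Real.fourier_real_eq_integral_exp_smul]
  congr 1 with x : 1
  rw [smul_eq_mul, hf, mul_comm]
  congr 2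
  have : (a : ℂ) ≠ 0 := by exact_mod_cast ha.ne'
  push_cast
  field_simp

/-- Poisson summation with periodic coefficients: for a Schwartz function `W`,
a positive integer `Q`, a real `N > 0`, and `c : ℤ → ℂ` of period `Q`,
`∑_{n ∈ ℤ} c(n) W(n/N) = (N/Q) ∑_{h ∈ ℤ} ĉ(h) Ŵ(hN/Q)`, where
`ĉ(h) = ∑_{α mod Q} c(α) e_Q(αh)` and `Ŵ(ξ) = ∫ W(y) e^{−2πiξy} dy`;
moreover both series converge absolutely. -/
theorem poisson_periodic (W : SchwartzMap ℝ ℂ) (Q : ℕ) (hQ : 0 < Q)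
    (N : ℝ) (hN : 0 < N) (c : ℤ → ℂ) (hc : Function.Periodic c (Q : ℤ)) :
    Summable (fun n : ℤ => c n * W ((n : ℝ) / N)) ∧
    Summable (fun h : ℤ =>
      (∑ α ∈ Finset.range Q, c (α : ℤ) * expq Q ((α : ℤ) * h)) *
        ∫ y : ℝ, W y * Complex.exp (-(2 * Real.pi * Complex.I * (((h : ℝ) * N / Q : ℝ)) * y))) ∧
    ∑' n : ℤ, c n * W ((n : ℝ) / N)
      = ((N / Q : ℝ) : ℂ) *
        ∑' h : ℤ,
          (∑ α ∈ Finset.range Q, c (α : ℤ) * expq Q ((α : ℤ) * h)) *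
            ∫ y : ℝ, W y * Complex.exp (-(2 * Real.pi * Complex.I * (((h : ℝ) * N / Q : ℝ)) * y)) := by
  have hQ' : (0 : ℝ) < Q := by exact_mod_cast hQ
  have : NeZero Q := ⟨hQ.ne'⟩
  obtain ⟨g, hg⟩ := exists_dilate W N⁻¹ (inv_ne_zero hN.ne')
  have haq : 0 < Q / N := div_pos hQ' hN
  obtain ⟨f, hf⟩ := exists_dilate W (Q / N) haq.ne'
  have hF := fun h : ℤ => fourier_dilate W f (Q / N) haq hf h
  set I : ℤ → ℂ := fun h => ∫ y : ℝ,
    W y * Complex.exp (-(2 * Real.pi * Complex.I * (((h : ℝ) * N / Q : ℝ)) * y)) with hI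
  have hF' : ∀ h : ℤ, FourierTransform.fourier f (h : ℝ) = ((N / Q : ℝ) : ℂ) * I h := by
    intro h
    rw [hF h, inv_div, div_div_eq_mul_div]
  have hNQ : ((N / Q : ℝ) : ℂ) ≠ 0 := by exact_mod_cast (div_pos hN hQ').ne'
  have hIs : Summable I := by
    have := schwartz_summable_int (FourierTransform.fourier f)
    simp_rw [hF'] at this
    exact (summable_mul_left_iff hNQ).1 this
  have hterm : ∀ α : ℕ, Summable (fun h : ℤ => c (α : ℤ) * expq Q ((α : ℤ) * h) * I h) := by
    intro α
    refine Summable.of_norm_bounded (hIs.norm.mul_left ‖c (α : ℤ)‖) fun h => ?_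
    rw [norm_mul, norm_mul, norm_expq, mul_one]
  have hcm : ∀ (m : ℤ) (α : ℤ), c (m * Q + α) = c α := by
    intro m α
    rw [add_comm]
    exact hc.int_mul m α
  have hcb : ∀ n, ‖c n‖ ≤ ∑ α : Fin Q, ‖c ((α : ℕ) : ℤ)‖ := by
    intro n
    obtain ⟨p, rfl⟩ := (Int.divModEquiv Q).symm.surjective n
    have : (Int.divModEquiv Q).symm p = p.1 * Q + ((p.2 : ℕ) : ℤ) := rfl
    rw [this, hcm]
    exact Finset.single_le_sum (f := fun α : Fin Q => ‖c ((α : ℕ) : ℤ)‖)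
      (fun _ _ => norm_nonneg _) (Finset.mem_univ p.2)
  have hS1 : Summable (fun n : ℤ => c n * W ((n : ℝ) / N)) := by
    refine Summable.of_norm_bounded ((schwartz_summable_int g).norm.mul_left
      (∑ α : Fin Q, ‖c ((α : ℕ) : ℤ)‖)) fun n => ?_
    rw [norm_mul, hg, inv_mul_eq_div]
    exact mul_le_mul_of_nonneg_right (hcb n) (norm_nonneg _)
  refine ⟨hS1, ?_, ?_⟩
  · simp_rw [Finset.sum_mul]
    exact summable_sum fun α _ => hterm α
  · simp_rw [Finset.sum_mul]
    rw [Summable.tsum_finsetSum fun α _ => hterm α, Finset.mul_sum]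
    let e : Fin Q × ℤ ≃ ℤ := (Equiv.prodComm (Fin Q) ℤ).trans (Int.divModEquiv Q).symm
    have he : ∀ p, e p = p.2 * Q + ((p.1 : ℕ) : ℤ) := fun p => rfl
    have hS2 : Summable (fun p : Fin Q × ℤ => c (e p) * W ((e p : ℝ) / N)) :=
      hS1.comp_injective e.injective
    rw [← e.tsum_eq, Summable.tsum_prod hS2, tsum_fintype,
      Finset.sum_range]
    refine Finset.sum_congr rfl fun α _ => ?_
    have hP := SchwartzMap.tsum_eq_tsum_fourier f ((α : ℕ) / Q)
    have h1 : ∀ m : ℤ, c (e (α, m)) * W ((e (α, m) : ℝ) / N)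
        = c ((α : ℕ) : ℤ) * f (((α : ℕ) : ℝ) / Q + m) := by
      intro m
      rw [he, hcm, hf]
      congr 2
      push_cast
      field_simp
      ring
    simp_rw [h1]
    rw [tsum_mul_left, hP, ← tsum_mul_left, ← tsum_mul_left]
    refine tsum_congr fun h => ?_
    rw [hF', fourier_coe_apply]
    have : Complex.exp (2 * Real.pi * Complex.I * h * (((α : ℕ) / Q : ℝ) : ℂ) / ((1 : ℝ) : ℂ))
        = expq Q (((α : ℕ) : ℤ) * h) := by
      unfold expq
      congr 1
      push_cast
      ring
    rw [this]
    ring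
end
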